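/- ∫_{-∞}^{∞} 8*(13848x^2 + 11652x + 11531) / (569088x^4 - 35136x^3 + 756384x^2 - 8616x + 232537) dx = ∫_{-∞}^{∞} 1/(x^4 + 6x^3 + 16x^2 + 21x + 13) dx. -/

import Mathlib

open MeasureTheory

theorem landen_aux (F G : ℝ → ℝ) (hF : Integrable F)
    (h : ∀ x : ℝ, 0 < x →
      F x + (x ^ 2)⁻¹ * F (-x⁻¹) = ((1 + (x ^ 2)⁻¹) / 2) * G ((x - x⁻¹) / 2)) :
    ∫ x, G x = ∫ x, F x := by
  have d1 : ∀ x ∈ Set.Ioi (0:ℝ),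
      HasDerivWithinAt (fun x : ℝ => -x⁻¹) ((x ^ 2)⁻¹) (Set.Ioi 0) x := by
    intro x hx
    have := (hasDerivAt_inv (ne_of_gt hx : x ≠ 0)).neg
    rw [neg_neg] at this
    exact this.hasDerivWithinAt
  have d2 : ∀ x ∈ Set.Ioi (0:ℝ),
      HasDerivWithinAt (fun x : ℝ => (x - x⁻¹) / 2) ((1 + (x ^ 2)⁻¹) / 2) (Set.Ioi 0) x := by
    intro x hx
    have := ((hasDerivAt_id x).sub (hasDerivAt_inv (ne_of_gt hx : x ≠ 0))).div_const 2
    rw [sub_neg_eq_add] at this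
    exact this.hasDerivWithinAt
  have i1 : Set.InjOn (fun x : ℝ => -x⁻¹) (Set.Ioi 0) := by
    intro a _ b _ hab
    simpa using hab
  have i2 : Set.InjOn (fun x : ℝ => (x - x⁻¹) / 2) (Set.Ioi 0) := by
    intro a ha b hb hab
    have ha' : 0 < a := ha
    have hb' : 0 < b := hb
    simp only at hab
    field_simp at hab
    have : (a - b) * (a * b + 1) = 0 := by linarith
    rcases mul_eq_zero.1 this with h | h
    · linarith
    · nlinarith [mul_pos ha' hb']
  have m1 : (fun x : ℝ => -x⁻¹) '' (Set.Ioi 0) = Set.Iio 0 := by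
    ext y
    constructor
    · rintro ⟨x, hx, rfl⟩
      have : 0 < x⁻¹ := inv_pos.2 hx
      simpa using this
    · intro hy
      have hy' : y < 0 := hy
      refine ⟨-y⁻¹, ?_, by simp [inv_neg]⟩
      have : y⁻¹ < 0 := inv_lt_zero.2 hy'
      simpa using this
  have m2 : (fun x : ℝ => (x - x⁻¹) / 2) '' (Set.Ioi 0) = Set.univ := by
    refine Set.eq_univ_of_forall fun y => ?_
    have hs : Real.sqrt (y ^ 2 + 1) ^ 2 = y ^ 2 + 1 := Real.sq_sqrt (by positivity)
    have hpos : 0 < y + Real.sqrt (y ^ 2 + 1) := by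
      have : |y| < Real.sqrt (y ^ 2 + 1) := by
        apply Real.lt_sqrt_of_sq_lt
        rw [sq_abs]; linarith
      linarith [neg_abs_le y]
    refine ⟨y + Real.sqrt (y ^ 2 + 1), hpos, ?_⟩
    have : (y + Real.sqrt (y ^ 2 + 1))⁻¹ = Real.sqrt (y ^ 2 + 1) - y := by
      rw [inv_eq_iff_eq_inv]
      apply eq_inv_of_mul_eq_one_left
      nlinarith
    simp only [this]
    ring
  have c1 := integral_image_eq_integral_abs_deriv_smul measurableSet_Ioi d1 i1 F
  have c2 := integral_image_eq_integral_abs_deriv_smul measurableSet_Ioi d2 i2 G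
  have c3 := (integrableOn_image_iff_integrableOn_abs_deriv_smul measurableSet_Ioi d1 i1 F).1
    hF.integrableOn
  rw [m1] at c1
  rw [m2, setIntegral_univ] at c2
  have s := integral_add_compl (measurableSet_Ioi (a := (0:ℝ))) hF
  rw [Set.compl_Ioi, integral_Iic_eq_integral_Iio, c1,
    ← integral_add hF.integrableOn c3] at s
  rw [c2, ← s]
  refine setIntegral_congr_fun measurableSet_Ioi fun x hx => ?_
  have e1 : |(x ^ 2)⁻¹| = (x ^ 2)⁻¹ := abs_of_nonneg (by positivity)
  have e2 : |(1 + (x ^ 2)⁻¹) / 2| = (1 + (x ^ 2)⁻¹) / 2 := abs_of_nonneg (by positivity)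
  simp only [e1, e2, smul_eq_mul]
  exact (h x hx).symm

theorem landen_int (N D : ℝ → ℝ) (hN : Continuous N) (hD : Continuous D)
    (hp : ∀ x, 0 < D x) (hN0 : ∀ x, 0 ≤ N x) (h : ∀ x, N x * (1 + x ^ 2) ≤ 100 * D x) :
    Integrable (fun x => N x / D x) := by
  refine (integrable_inv_one_add_sq.const_mul 100).mono'
    (hN.div hD fun x => (hp x).ne').aestronglyMeasurable (Filter.Eventually.of_forall fun x => ?_)
  rw [Real.norm_of_nonneg (div_nonneg (hN0 x) (hp x).le), ← div_eq_mul_inv,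
    div_le_div_iff₀ (hp x) (by positivity)]
  exact h x

theorem pos0 (x : ℝ) : 0 < x ^ 4 + 6 * x ^ 3 + 16 * x ^ 2 + 21 * x + 13 := by
  nlinarith [sq_nonneg (x ^ 2 + 3 * x + 7 / 2)]

theorem pos1 (x : ℝ) : 0 < 208 * x ^ 4 + 456 * x ^ 3 + 600 * x ^ 2 + 396 * x + 171 := by
  nlinarith [sq_nonneg (x ^ 2 + 57 / 52 * x + 1 / 2), sq_nonneg (x + 1 / 2), sq_nonneg x]

theorem pos2 (x : ℝ) :
    0 < 569088 * x ^ 4 - 35136 * x ^ 3 + 756384 * x ^ 2 - 8616 * x + 232537 := by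
  nlinarith [sq_nonneg (x ^ 2 - 1 / 32 * x), sq_nonneg (x - 1 / 2), sq_nonneg x]

theorem landen_step_two_invariance :
    ∫ x : ℝ, 8 * (13848 * x ^ 2 + 11652 * x + 11531) /
        (569088 * x ^ 4 - 35136 * x ^ 3 + 756384 * x ^ 2 - 8616 * x + 232537)
      = ∫ x : ℝ, 1 / (x ^ 4 + 6 * x ^ 3 + 16 * x ^ 2 + 21 * x + 13) := by
  trans ∫ x : ℝ, (8 * x ^ 2 + 24 * x + 60) /
        (208 * x ^ 4 + 456 * x ^ 3 + 600 * x ^ 2 + 396 * x + 171)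
  · apply landen_aux
    · apply landen_int _ _ (by fun_prop) (by fun_prop) pos1
      · intro x; nlinarith [sq_nonneg (x + 3 / 2)]
      · intro x
        nlinarith [sq_nonneg (x ^ 2 + 57 / 52 * x + 1 / 2), sq_nonneg (x + 1 / 2), sq_nonneg x]
    · intro x hx
      have h1 := (pos1 x).ne'
      have h2 := (pos1 (-x⁻¹)).ne'
      have h3 := (pos2 ((x - x⁻¹) / 2)).ne'
      have hD : (569088 * ((x - x⁻¹) / 2) ^ 4 - 35136 * ((x - x⁻¹) / 2) ^ 3
          + 756384 * ((x - x⁻¹) / 2) ^ 2 - 8616 * ((x - x⁻¹) / 2) + 232537)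
          = (208 * x ^ 4 + 456 * x ^ 3 + 600 * x ^ 2 + 396 * x + 171) *
          (208 * (-x⁻¹) ^ 4 + 456 * (-x⁻¹) ^ 3 + 600 * (-x⁻¹) ^ 2 + 396 * (-x⁻¹) + 171) := by
        field_simp
        ring
      rw [hD, ← mul_div_assoc, ← mul_div_assoc, div_add_div _ _ h1 h2]
      congr 1
      field_simp
      ring
  · apply landen_aux
    · apply landen_int _ _ (by fun_prop) (by fun_prop) pos0
      · intro x; norm_num
      · intro x
        nlinarith [sq_nonneg ((x + 3 / 2) ^ 2), sq_nonneg (x + 3 / 2), sq_nonneg (x + 3)]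
    · intro x hx
      have h1 := (pos0 x).ne'
      have h2 := (pos0 (-x⁻¹)).ne'
      have hD : (208 * ((x - x⁻¹) / 2) ^ 4 + 456 * ((x - x⁻¹) / 2) ^ 3
          + 600 * ((x - x⁻¹) / 2) ^ 2 + 396 * ((x - x⁻¹) / 2) + 171)
          = (x ^ 4 + 6 * x ^ 3 + 16 * x ^ 2 + 21 * x + 13) *
          ((-x⁻¹) ^ 4 + 6 * (-x⁻¹) ^ 3 + 16 * (-x⁻¹) ^ 2 + 21 * (-x⁻¹) + 13) := by
        field_simp
        ring
      rw [hD, ← mul_div_assoc, ← mul_div_assoc, div_add_div _ _ h1 h2]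
      congr 1
      field_simp
      ring
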